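/- Let G = (V, E) be a strongly connected digraph with start vertex s, let r be a marked vertex of G(s), and let v be a vertex not dominated by r in G(s). Then (i) there is a path from v to r in G that contains no vertex of T(r) other than r, and (ii) every simple path in G from v to any vertex of T(r) contains the edge (d(r), r). -/

import Mathlib

variable {V : Type*}

/-- `p` is a path from `u` to `w` in the digraph with edge set `E`:
a nonempty list of vertices starting at `u`, ending at `w`, with consecutive edges in `E`. -/
def IsPathFrom (E : Set (V × V)) (u w : V) (p : List V) : Prop :=
  p.head? = some u ∧ p.getLast? = some w ∧ p.Chain' (fun a b => (a, b) ∈ E)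

/-- There is a path from `u` to `w` in the digraph with edge set `E`. -/
def Reaches (E : Set (V × V)) (u w : V) : Prop :=
  ∃ p, IsPathFrom E u w p

/-- Every vertex has a path to every other vertex. -/
def StronglyConnected (E : Set (V × V)) : Prop :=
  ∀ u w : V, Reaches E u w

/-- `v` and `w` are 2-edge-connected: `v = w` or, for every edge `e`,
there are paths from `v` to `w` and from `w` to `v` avoiding `e`. -/
def TwoEdgeConn (E : Set (V × V)) (v w : V) : Prop :=
  v = w ∨ ∀ e ∈ E, Reaches (E \ {e}) v w ∧ Reaches (E \ {e}) w v

/-- `w` is 2-edge-connected from `v`: for every edge `e` there is a path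
from `v` to `w` avoiding `e`. -/
def TwoEdgeConnFrom (E : Set (V × V)) (v w : V) : Prop :=
  ∀ e ∈ E, Reaches (E \ {e}) v w

/-- `u` dominates `w` in the flow graph with start vertex `s`:
every path from `s` to `w` contains `u`. -/
def Dominates (E : Set (V × V)) (s u w : V) : Prop :=
  ∀ p, IsPathFrom E s w p → u ∈ p

/-- `(u, w)` is a bridge of the flow graph with start vertex `s`:
every path from `s` to `w` contains the edge `(u, w)`. -/
def IsBridge (E : Set (V × V)) (s u w : V) : Prop :=
  (u, w) ∈ E ∧ ∀ p, IsPathFrom E s w p → (u, w) ∈ p.zip p.tail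

/-- `w` is marked in the flow graph with start vertex `s`: some bridge ends at `w`. -/
def Marked (E : Set (V × V)) (s w : V) : Prop :=
  ∃ u, IsBridge E s u w

/-- The reverse digraph: every edge direction is reversed. -/
def reverseE (E : Set (V × V)) : Set (V × V) :=
  {e | (e.2, e.1) ∈ E}

/-- `u` and `w` are mutually reachable. -/
def MutualReach (E : Set (V × V)) (u w : V) : Prop :=
  Reaches E u w ∧ Reaches E w u

/-- The number of strongly connected components: the number of equivalence
classes of the mutual-reachability relation. -/
noncomputable def numSCC (E : Set (V × V)) : ℕ :=
  Nat.card (Quot (MutualReach E))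

/-- `e` is a strong bridge: removing it increases the number of strongly
connected components. -/
def IsStrongBridge (E : Set (V × V)) (e : V × V) : Prop :=
  e ∈ E ∧ numSCC E < numSCC (E \ {e})

/-- `d` is the immediate dominator of `w` in the flow graph with start vertex `s`:
`d` is a proper dominator of `w` dominated by every proper dominator of `w`. -/
def ImmDomIs (E : Set (V × V)) (s w d : V) : Prop :=
  Dominates E s d w ∧ d ≠ w ∧ ∀ x, Dominates E s x w → x ≠ w → Dominates E s x d

/-- `r` is the deepest marked dominator `r_v` of `v`: either `r` is a marked
dominator of `v` dominated by every marked dominator of `v`, or no marked vertex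
dominates `v` and `r = s`. -/
def DeepestMarkedDomIs (E : Set (V × V)) (s v r : V) : Prop :=
  (Marked E s r ∧ Dominates E s r v ∧
    ∀ x, Marked E s x → Dominates E s x v → Dominates E s x r)
  ∨ (r = s ∧ ∀ x, Marked E s x → ¬ Dominates E s x v)

/-- `T(r)`: the vertices whose deepest marked dominator is `r`. -/
def Tset (E : Set (V × V)) (s r : V) : Set V :=
  {v | DeepestMarkedDomIs E s v r}

/-- The roots of the decomposition of the dominator tree: `s` and the marked vertices. -/
def IsRoot (E : Set (V × V)) (s r : V) : Prop :=
  r = s ∨ Marked E s r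

/-- `z` is a marked child (in the dominator tree) of a boundary vertex of `T(r)`. -/
def MarkedChildOfBoundary (E : Set (V × V)) (s r z : V) : Prop :=
  Marked E s z ∧ ∃ x ∈ Tset E s r, ImmDomIs E s z x

/-- The vertex set `V_r` of the auxiliary graph `G_r` (with `dr` playing the role
of `d(r)` when `r ≠ s`): the ordinary vertices `T(r)`, the marked children of
boundary vertices of `T(r)`, and (if `r ≠ s`) the vertex `d(r)`. -/
def auxVerts (E : Set (V × V)) (s r dr : V) : Set V :=
  Tset E s r ∪ {z | MarkedChildOfBoundary E s r z} ∪ {x | r ≠ s ∧ x = dr}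

/-- The edge set `E_r` of the auxiliary graph `G_r` (with `dr` playing the role of
`d(r)` when `r ≠ s`): edges of `G` between ordinary vertices; the edge `(v, w)` for
each boundary vertex `v ∈ T(r)` and marked child `w` of `v`; the edge `(d(r), r)` if
`r ≠ s`; and the shortcut edges of types (a), (b), (c). -/
def auxEdges (E : Set (V × V)) (s r dr : V) : Set (V × V) :=
  {e | e ∈ E ∧ e.1 ∈ Tset E s r ∧ e.2 ∈ Tset E s r} ∪
  {e | e.1 ∈ Tset E s r ∧ Marked E s e.2 ∧ ImmDomIs E s e.2 e.1} ∪
  {e | r ≠ s ∧ e = (dr, r)} ∪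
  {e | ∃ u v, (u, v) ∈ E ∧ u ∈ Tset E s r ∧ ¬ Dominates E s r v ∧ e = (u, dr)} ∪
  {e | ∃ u v z, (u, v) ∈ E ∧ v ∈ Tset E s r ∧ Dominates E s r u ∧ u ∉ Tset E s r ∧
      MarkedChildOfBoundary E s r z ∧ Dominates E s z u ∧ e = (z, v)} ∪
  {e | ∃ u v z, (u, v) ∈ E ∧ Dominates E s r u ∧ u ∉ Tset E s r ∧ ¬ Dominates E s r v ∧
      MarkedChildOfBoundary E s r z ∧ Dominates E s z u ∧ e = (z, dr)}

/-!
A vertex `v` not dominated by `r` is the end of a path `q` from `s` avoiding `r`. Appending to `q`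
a path from `v` to a vertex dominated by `r` shows that the latter path visits `r`; hence a path
from `v` to `r`, cut at its first visit to `r`, meets no other vertex dominated by `r`. If a bridge
`(u, r)` ends at `r`, then appending to `q` a path from `v` to `r` shows that the latter path
contains `(u, r)`, since the edges of `q` avoid `r`. Finally `u = d(r)`: both are proper dominators
of `r`, so `u` dominates `d(r)`, and `d(r)` dominates `u` because `(u, r)` is an edge.
-/

theorem consecutivePairs_append_cons (l₁ l₂ : List V) (m : V) :
    (l₁ ++ m :: l₂).consecutivePairs =
      (l₁ ++ [m]).consecutivePairs ++ (m :: l₂).consecutivePairs := by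
  induction l₁ with
  | nil => simp [List.consecutivePairs]
  | cons a l ih => cases l <;> simp_all [List.consecutivePairs]

theorem fst_mem_of_mem_consecutivePairs_concat {l : List V} {x y z : V}
    (h : (x, y) ∈ (l ++ [z]).consecutivePairs) : x ∈ l := by
  induction l with
  | nil => simp [List.consecutivePairs] at h
  | cons a l ih => cases l <;> grind

section Paths

variable {E : Set (V × V)} {u w x y : V} {p : List V}

theorem IsPathFrom.head_mem (h : IsPathFrom E u w p) : u ∈ p :=
  List.mem_of_head? h.1

theorem IsPathFrom.last_mem (h : IsPathFrom E u w p) : w ∈ p :=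
  List.mem_of_getLast? h.2.1

theorem IsPathFrom.exists_eq_cons (h : IsPathFrom E u w p) : ∃ l, p = u :: l :=
  List.head?_eq_some_iff.1 h.1

theorem IsPathFrom.exists_eq_concat (h : IsPathFrom E u w p) : ∃ l, p = l ++ [w] :=
  List.getLast?_eq_some_iff.1 h.2.1

theorem isPathFrom_pair (h : (u, w) ∈ E) : IsPathFrom E u w [u, w] :=
  ⟨rfl, rfl, List.isChain_pair.2 h⟩

theorem isPathFrom_append_cons {l₁ l₂ : List V} :
    IsPathFrom E u w (l₁ ++ x :: l₂) ↔
      IsPathFrom E u x (l₁ ++ [x]) ∧ IsPathFrom E x w (x :: l₂) := by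
  have head_eq : (l₁ ++ x :: l₂).head? = (l₁ ++ [x]).head? := by cases l₁ <;> rfl
  have last_eq : (l₁ ++ x :: l₂).getLast? = (x :: l₂).getLast? :=
    List.getLast?_append_of_ne_nil _ (List.cons_ne_nil x l₂)
  constructor
  · rintro ⟨hhead, hlast, hchain⟩
    obtain ⟨hchain₁, hchain₂⟩ := List.isChain_split.1 hchain
    exact ⟨⟨head_eq ▸ hhead, List.getLast?_concat, hchain₁⟩, rfl, last_eq ▸ hlast, hchain₂⟩
  · rintro ⟨⟨hhead, -, hchain₁⟩, -, hlast, hchain₂⟩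
    exact ⟨head_eq ▸ hhead, last_eq ▸ hlast, List.isChain_split.2 ⟨hchain₁, hchain₂⟩⟩

theorem IsPathFrom.reaches_of_mem (h : IsPathFrom E u w p) (hx : x ∈ p) : Reaches E u x := by
  obtain ⟨l₁, l₂, rfl⟩ := List.append_of_mem hx
  exact ⟨l₁ ++ [x], (isPathFrom_append_cons.1 h).1⟩

theorem Reaches.trans (hux : Reaches E u x) (hxw : Reaches E x w) : Reaches E u w := by
  obtain ⟨p, hp⟩ := hux
  obtain ⟨q, hq⟩ := hxw
  obtain ⟨l₁, rfl⟩ := hp.exists_eq_concat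
  obtain ⟨l₂, rfl⟩ := hq.exists_eq_cons
  exact ⟨l₁ ++ x :: l₂, isPathFrom_append_cons.2 ⟨hp, hq⟩⟩

theorem Reaches.exists_isPathFrom_concat (h : Reaches E u w) :
    ∃ l, w ∉ l ∧ IsPathFrom E u w (l ++ [w]) := by
  obtain ⟨p, hp⟩ := h
  obtain ⟨l, l', rfl, hl⟩ := List.eq_append_cons_of_mem hp.last_mem
  exact ⟨l, hl, (isPathFrom_append_cons.1 hp).1⟩

theorem IsPathFrom.exists_isPathFrom_subset {l : List V} (h : IsPathFrom E u w (l ++ [w]))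
    (hy : y ∈ l) : ∃ q, IsPathFrom E u y q ∧ q ⊆ l := by
  obtain ⟨l₁, l₂, rfl⟩ := List.append_of_mem hy
  rw [List.append_assoc, List.cons_append] at h
  exact ⟨l₁ ++ [y], (isPathFrom_append_cons.1 h).1, by simp⟩

end Paths

section Dominators

variable {E : Set (V × V)} {s u v w r d : V} {p : List V}

theorem not_dominates_iff : ¬ Dominates E s r v ↔ ∃ q, IsPathFrom E s v q ∧ r ∉ q := by
  simp only [Dominates, not_forall, exists_prop]

theorem reaches_of_not_dominates (hv : ¬ Dominates E s r v) : Reaches E s v := by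
  obtain ⟨q, hq, -⟩ := not_dominates_iff.1 hv
  exact ⟨q, hq⟩

theorem start_dominates (E : Set (V × V)) (s v : V) : Dominates E s s v :=
  fun _ hp => hp.head_mem

theorem Dominates.antisymm (huv : Dominates E s u v) (hvu : Dominates E s v u)
    (hu : Reaches E s u) : u = v := by
  obtain ⟨l, hul, hl⟩ := hu.exists_isPathFrom_concat
  by_contra hne
  have hvl : v ∈ l := by simpa [Ne.symm hne] using hvu _ hl
  obtain ⟨q, hq, hql⟩ := hl.exists_isPathFrom_subset hvl
  exact hul (hql (huv q hq))

theorem Dominates.of_edge (hd : Dominates E s d w) (hdw : d ≠ w) (huw : (u, w) ∈ E) :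
    Dominates E s d u := by
  intro q hq
  obtain ⟨l, rfl⟩ := hq.exists_eq_concat
  have hlw : IsPathFrom E s w (l ++ [u, w]) :=
    isPathFrom_append_cons.2 ⟨hq, isPathFrom_pair huw⟩
  simpa [hdw] using hd _ hlw

theorem Dominates.mem_of_isPathFrom (hw : Dominates E s r w) (hv : ¬ Dominates E s r v)
    (hp : IsPathFrom E v w p) : r ∈ p := by
  obtain ⟨q, hq, hrq⟩ := not_dominates_iff.1 hv
  obtain ⟨l, rfl⟩ := hq.exists_eq_concat
  obtain ⟨t, rfl⟩ := hp.exists_eq_cons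
  have hr : r ∈ l ++ v :: t := hw _ (isPathFrom_append_cons.2 ⟨hq, hp⟩)
  have hrl : r ∉ l := fun h => hrq (List.mem_append_left _ h)
  exact (List.mem_append.1 hr).resolve_left hrl

theorem exists_isPathFrom_forall_dominates_eq (hv : ¬ Dominates E s r v) (hvr : Reaches E v r) :
    ∃ p, IsPathFrom E v r p ∧ ∀ x ∈ p, Dominates E s r x → x = r := by
  obtain ⟨l, hrl, hl⟩ := hvr.exists_isPathFrom_concat
  refine ⟨l ++ [r], hl, fun x hx hrx => ?_⟩
  by_contra hne
  have hxl : x ∈ l := by simpa [hne] using hx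
  obtain ⟨q, hq, hql⟩ := hl.exists_isPathFrom_subset hxl
  exact hrl (hql (hrx.mem_of_isPathFrom hv hq))

theorem dominates_of_mem_Tset (hv : v ∈ Tset E s r) : Dominates E s r v := by
  obtain ⟨-, hrv, -⟩ | ⟨rfl, -⟩ := hv
  · exact hrv
  · exact start_dominates E r v

end Dominators

section Bridges

variable {E : Set (V × V)} {s u v w r d : V} {p : List V}

theorem IsBridge.dominates (hb : IsBridge E s u r) : Dominates E s u r :=
  fun p hp => (List.of_mem_zip (hb.2 p hp)).1

theorem IsBridge.ne (hb : IsBridge E s u r) (hr : Reaches E s r) : u ≠ r := by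
  obtain ⟨l, hrl, hl⟩ := hr.exists_isPathFrom_concat
  exact ne_of_mem_of_not_mem (fst_mem_of_mem_consecutivePairs_concat (hb.2 _ hl)) hrl

theorem IsBridge.eq_of_immDomIs (hb : IsBridge E s u r) (hd : ImmDomIs E s r d)
    (hr : Reaches E s r) : u = d := by
  obtain ⟨hdr, hne, hd_deepest⟩ := hd
  have hud : Dominates E s u d := hd_deepest u hb.dominates (hb.ne hr)
  have hdu : Dominates E s d u := hdr.of_edge hne hb.1
  have hu : Reaches E s u := by
    obtain ⟨p, hp⟩ := hr
    exact hp.reaches_of_mem (hb.dominates p hp)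
  exact hud.antisymm hdu hu

theorem IsBridge.mem_consecutivePairs_of_isPathFrom (hb : IsBridge E s u r)
    (hv : ¬ Dominates E s r v) (hp : IsPathFrom E v r p) : (u, r) ∈ p.consecutivePairs := by
  obtain ⟨q, hq, hrq⟩ := not_dominates_iff.1 hv
  obtain ⟨l, rfl⟩ := hq.exists_eq_concat
  obtain ⟨t, rfl⟩ := hp.exists_eq_cons
  have hur : (u, r) ∈ (l ++ v :: t).consecutivePairs :=
    hb.2 _ (isPathFrom_append_cons.2 ⟨hq, hp⟩)
  rw [consecutivePairs_append_cons, List.mem_append] at hur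
  exact hur.resolve_left fun h => hrq (List.mem_of_mem_tail (List.of_mem_zip h).2)

theorem IsBridge.mem_consecutivePairs_of_dominates (hb : IsBridge E s u r)
    (hv : ¬ Dominates E s r v) (hw : Dominates E s r w) (hp : IsPathFrom E v w p) :
    (u, r) ∈ p.consecutivePairs := by
  obtain ⟨l₁, l₂, rfl⟩ := List.append_of_mem (hw.mem_of_isPathFrom hv hp)
  rw [consecutivePairs_append_cons]
  exact List.mem_append_left _
    (hb.mem_consecutivePairs_of_isPathFrom hv (isPathFrom_append_cons.1 hp).1)

end Bridges

theorem paths_into_subtree_general (E : Set (V × V)) (s r dr v : V)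
    (hm : Marked E s r) (hdr : ImmDomIs E s r dr) (hv : ¬ Dominates E s r v) :
    (Reaches E v r → ∃ p, IsPathFrom E v r p ∧ ∀ x ∈ p, Dominates E s r x → x = r) ∧
    (∀ w, Dominates E s r w → ∀ p, IsPathFrom E v w p → (dr, r) ∈ p.zip p.tail) := by
  refine ⟨exists_isPathFrom_forall_dominates_eq hv, fun w hw p hp => ?_⟩
  obtain ⟨u, hb⟩ := hm
  have hr : Reaches E s r :=
    (reaches_of_not_dominates hv).trans (hp.reaches_of_mem (hw.mem_of_isPathFrom hv hp))
  rw [← hb.eq_of_immDomIs hdr hr]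
  exact hb.mem_consecutivePairs_of_dominates hv hw hp

/-- Let `r` be a marked vertex of `G(s)` and `v` a vertex not dominated by `r`.
Then (i) there is a path from `v` to `r` containing no vertex of `T(r)` other than
`r`, and (ii) every simple path from `v` to any vertex of `T(r)` contains the edge
`(d(r), r)`. -/
theorem paths_into_subtree
    {V : Type*} [Fintype V] (E : Set (V × V)) (s : V)
    (hsc : StronglyConnected E) (r dr v : V)
    (hm : Marked E s r) (hdr : ImmDomIs E s r dr) (hv : ¬ Dominates E s r v) :
    (∃ p, IsPathFrom E v r p ∧ ∀ x ∈ p, x ∈ Tset E s r → x = r) ∧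
    (∀ w ∈ Tset E s r, ∀ p, IsPathFrom E v w p → p.Nodup →
      (dr, r) ∈ p.zip p.tail) := by
  obtain ⟨hto_r, hto_w⟩ := paths_into_subtree_general E s r dr v hm hdr hv
  obtain ⟨p, hp, hp_eq⟩ := hto_r (hsc v r)
  exact ⟨⟨p, hp, fun x hx hxT => hp_eq x hx (dominates_of_mem_Tset hxT)⟩,
    fun w hw p hp _ => hto_w w (dominates_of_mem_Tset hw) p hp⟩
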